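/- Let F be a field of characteristic 2, K/F a purely inseparable extension of exponent 1 (K² ⊆ F), B a bilinear Pfister form over F, and ρ a nonsingular quadratic form over K such that B_K ⊗ ρ is defined over F, i.e. there exists a quadratic form φ over F with φ_K ≅ B_K ⊗ ρ. Then there exists a nonsingular quadratic form ρ₀ over F with φ_K ≅ B_K ⊗ ρ ≅ (B ⊗ ρ₀)_K. -/

import Mathlib

/-!  A concrete coefficient-matrix model of (possibly singular) finite-dimensional
quadratic forms over a field, suitable for characteristic 2. -/

/-- Coefficient representation of a (finite-dimensional) quadratic form over a field `F`:
the form of dimension `dim` given by `q(x) = ∑ i j, c i j * x i * x j`. -/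
structure QF (F : Type*) [Field F] : Type _ where
  dim : ℕ
  c : Matrix (Fin dim) (Fin dim) F

namespace QF

variable {F E : Type*} [Field F] [Field E]

/-- Evaluation of the quadratic form at a vector. -/
def eval (q : QF F) (x : Fin q.dim → F) : F :=
  ∑ i, ∑ j, q.c i j * x i * x j

/-- Scalar extension (base change) of a quadratic form along a ring homomorphism. -/
def map (f : F →+* E) (q : QF F) : QF E :=
  ⟨q.dim, fun i j => f (q.c i j)⟩

/-- Orthogonal sum. -/
def orthSum (q q' : QF F) : QF F :=
  ⟨q.dim + q'.dim,
    Matrix.reindex finSumFinEquiv finSumFinEquiv (Matrix.fromBlocks q.c 0 0 q'.c)⟩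

/-- Scaling `a • q`. -/
def smul (a : F) (q : QF F) : QF F := ⟨q.dim, a • q.c⟩

/-- The nonsingular binary quadratic form `[a,b] : (x,y) ↦ ax² + xy + by²`. -/
def bin (a b : F) : QF F := ⟨2, !![a, 1; 0, b]⟩

/-- The diagonal (totally singular) quadratic form `⟨a₁, …, aₙ⟩`. -/
def diag {n : ℕ} (v : Fin n → F) : QF F := ⟨n, Matrix.diagonal v⟩

/-- The zero-dimensional quadratic form. -/
def nil : QF F := { dim := 0, c := 0 }

/-- The one-dimensional form `⟨1⟩`. -/
def unit : QF F := diag (fun _ : Fin 1 => (1 : F))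

/-- Orthogonal sum of a list of forms. -/
def sumList (l : List (QF F)) : QF F := l.foldr orthSum nil

/-- `pfTensor [a₁,…,aₙ] q` is the tensor product `⟨⟨a₁,…,aₙ⟩⟩_b ⊗ q` of the bilinear
Pfister form `⟨⟨a₁,…,aₙ⟩⟩_b = ⟨1,a₁⟩_b ⊗ ⋯ ⊗ ⟨1,aₙ⟩_b` with the quadratic form `q`,
via `⟨1,a⟩_b ⊗ q ≅ q ⊥ a·q`. -/
def pfTensor (l : List F) (q : QF F) : QF F :=
  l.foldr (fun a r => orthSum r (smul a r)) q

/-- The hyperbolic plane `ℍ ≅ [0,0]`. -/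
def hypPlane : QF F := bin 0 0

/-- The orthogonal sum of `k` hyperbolic planes. -/
def hyp (k : ℕ) : QF F := sumList (List.replicate k hypPlane)

/-- The `l`-dimensional zero form `⟨0,…,0⟩`. -/
def zeros (l : ℕ) : QF F := diag (fun _ : Fin l => (0 : F))

/-- Isometry of quadratic forms. -/
def Isometric (q q' : QF F) : Prop :=
  ∃ e : (Fin q.dim → F) ≃ₗ[F] (Fin q'.dim → F), ∀ x, q'.eval (e x) = q.eval x

/-- Anisotropy: the form has no nontrivial zero. -/
def Anisotropic (q : QF F) : Prop := ∀ x, q.eval x = 0 → x = 0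

/-- A quadratic form is nonsingular if the radical of its polar form
`B_q(x,y) = q(x+y) - q(x) - q(y)` (with matrix `c + cᵀ`) is trivial. -/
def Nonsingular (q : QF F) : Prop := ∀ x, (q.c + q.c.transpose).mulVec x = 0 → x = 0

/-- A quadratic form is totally singular if its polar form vanishes identically. -/
def TotallySingular (q : QF F) : Prop := q.c + q.c.transpose = 0

/-- A quadratic form is hyperbolic if it is isometric to an orthogonal sum of
hyperbolic planes. -/
def Hyperbolic (q : QF F) : Prop := ∃ k, Isometric q (hyp k)

/-- Witt equivalence: `q ~ q'` iff the anisotropic parts agree, equivalently the two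
forms become isometric after adding suitable numbers of hyperbolic planes and zero
forms. -/
def WittEquiv (q q' : QF F) : Prop :=
  ∃ k k' l l', Isometric (orthSum q (orthSum (hyp k) (zeros l)))
    (orthSum q' (orthSum (hyp k') (zeros l')))

/-- `AnisoPartOf φ q` : `φ` is (isometric to) the anisotropic part of `q`, i.e. `φ` is
anisotropic and `q ≅ k × ℍ ⊥ φ ⊥ ⟨0,…,0⟩`. -/
def AnisoPartOf (φ q : QF F) : Prop :=
  Anisotropic φ ∧ ∃ k l, Isometric q (orthSum (hyp k) (orthSum φ (zeros l)))

/-- `Dominates q' q` means `q ≺ q'`, i.e. `q'` dominates `q`: there is an injective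
linear map `t` of the underlying spaces with `q' ∘ t = q`. -/
def Dominates (q' q : QF F) : Prop :=
  ∃ t : (Fin q.dim → F) →ₗ[F] (Fin q'.dim → F), Function.Injective t ∧
    ∀ x, q'.eval (t x) = q.eval x

/-- The affine quadric polynomial `∑ cᵢⱼ XᵢXⱼ` of a quadratic form. -/
noncomputable def toPoly (q : QF F) : MvPolynomial (Fin q.dim) F :=
  ∑ i, ∑ j, MvPolynomial.C (q.c i j) * (MvPolynomial.X i * MvPolynomial.X j)

/-- The affine coordinate ring of the (reduced) quadric `q = 0`. -/
abbrev CoordRing (q : QF F) : Type _ :=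
  MvPolynomial (Fin q.dim) F ⧸ (Ideal.span {q.toPoly}).radical

/-- The function field of the quadric `q = 0` (assuming the quadric is integral). -/
abbrev FunctionField (q : QF F) [IsDomain (CoordRing q)] : Type _ :=
  FractionRing (CoordRing q)

/-- The canonical ring homomorphism from a base field `F` into the function field of a
quadric defined over an extension field `K` of `F`. -/
noncomputable def toFunctionField {K : Type*} [Field K] [Algebra F K] (q : QF K)
    [IsDomain (CoordRing q)] : F →+* FunctionField q :=
  (algebraMap (CoordRing q) (FunctionField q)).comp
    ((algebraMap K (CoordRing q)).comp (algebraMap F K))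

end QF


namespace PfDesc

open QF QuadraticMap

section basics
variable {K : Type*} [Field K]

/-- The Mathlib quadratic form attached to a `QF`. -/
noncomputable def toQ (q : QF K) : QuadraticForm K (Fin q.dim → K) :=
  (Matrix.toBilin' q.c).toQuadraticMap

theorem toQ_apply (q : QF K) (x : Fin q.dim → K) : toQ q x = q.eval x := by
  simp only [toQ, LinearMap.BilinMap.toQuadraticMap_apply, Matrix.toBilin'_apply, QF.eval]
  refine Finset.sum_congr rfl fun i _ => Finset.sum_congr rfl fun j _ => by ring

theorem polar_toQ (q : QF K) (x y : Fin q.dim → K) :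
    polar (toQ q) x y = y ⬝ᵥ (q.c + q.c.transpose).mulVec x := by
  simp only [toQ, LinearMap.BilinMap.polar_toQuadraticMap, Matrix.toBilin'_apply']
  rw [Matrix.add_mulVec, dotProduct_add, Matrix.mulVec_transpose, add_comm]
  congr 1
  rw [dotProduct_comm y, Matrix.dotProduct_mulVec]

theorem nonsingular_iff (q : QF K) :
    q.Nonsingular ↔ ∀ x, (∀ y, polar (toQ q) x y = 0) → x = 0 := by
  unfold QF.Nonsingular
  refine forall_congr' fun x => imp_congr_left ?_
  constructor
  · intro h y
    rw [polar_toQ, h, dotProduct_zero]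
  · intro h
    ext i
    have := h (Pi.single i 1)
    rw [polar_toQ] at this
    simpa using this

theorem isometric_iff (q q' : QF K) : Isometric q q' ↔ (toQ q).Equivalent (toQ q') := by
  constructor
  · rintro ⟨e, he⟩
    exact ⟨⟨e, fun x => by
      have := he x
      rw [← toQ_apply, ← toQ_apply] at this
      exact this⟩⟩
  · rintro ⟨e⟩
    exact ⟨e.toLinearEquiv, fun x => by
      rw [← toQ_apply, ← toQ_apply]
      exact e.map_app x⟩

/-- splitting of coordinates -/
def splitE (m n : ℕ) : (Fin (m + n) → K) ≃ₗ[K] (Fin m → K) × (Fin n → K) :=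
  (LinearEquiv.funCongrLeft K K finSumFinEquiv).trans (LinearEquiv.sumArrowLequivProdArrow _ _ K K)

theorem orthSum_equiv (q q' : QF K) :
    (toQ (orthSum q q')).Equivalent ((toQ q).prod (toQ q')) := by
  refine ⟨⟨splitE _ _, fun x => ?_⟩⟩
  change (toQ q).prod (toQ q') (splitE q.dim q'.dim x) = _
  rw [prod_apply, toQ_apply, toQ_apply, toQ_apply]
  unfold QF.eval orthSum
  dsimp only
  rw [← (finSumFinEquiv (m := q.dim) (n := q'.dim)).sum_comp]
  simp_rw [← (finSumFinEquiv (m := q.dim) (n := q'.dim)).sum_comp]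
  simp [Fintype.sum_sum_type, splitE, LinearEquiv.funCongrLeft]
  rfl

theorem smul_toQ (a : K) (q : QF K) : (toQ (smul a q)).Equivalent (a • toQ q) := by
  refine ⟨⟨LinearEquiv.refl K (Fin q.dim → K), fun (x : Fin q.dim → K) => ?_⟩⟩
  change a * toQ q x = toQ (smul a q) x
  refine Eq.trans ?_ (toQ_apply (smul a q) x).symm
  rw [toQ_apply q]
  simp [QF.eval, QF.smul, Finset.mul_sum, mul_assoc]
  rfl

theorem smul_equiv {V W : Type*} [AddCommGroup V] [Module K V] [AddCommGroup W] [Module K W]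
    {Q : QuadraticForm K V} {Q' : QuadraticForm K W} (a : K) (h : Q.Equivalent Q') :
    (a • Q).Equivalent (a • Q') := by
  obtain ⟨e⟩ := h
  exact ⟨⟨e.toLinearEquiv, fun x => by
    have := e.map_app x
    exact congrArg (a • ·) this⟩⟩

/-- constructing equivalences -/
theorem equiv_mk {V W : Type*} [AddCommGroup V] [Module K V] [AddCommGroup W] [Module K W]
    {Q : QuadraticForm K V} {Q' : QuadraticForm K W} (e : V ≃ₗ[K] W)
    (h : ∀ x, Q' (e x) = Q x) : Q.Equivalent Q' := ⟨⟨e, h⟩⟩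

instance isoSetoid (K : Type*) [Field K] : Setoid (QF K) where
  r q q' := Isometric q q'
  iseqv := by
    constructor
    · intro q; rw [isometric_iff]
    · intro q q' h; rw [isometric_iff] at *; exact h.symm
    · intro q q' q'' h h'; rw [isometric_iff] at *; exact h.trans h'

/-- isometry classes -/
def IQ (K : Type*) [Field K] := Quotient (isoSetoid K)

/-- class of a form -/
def cls (q : QF K) : IQ K := Quotient.mk (isoSetoid K) q

theorem cls_eq {q q' : QF K} : cls q = cls q' ↔ Isometric q q' := Quotient.eq (r := isoSetoid K)

theorem cls_eq' {q q' : QF K} : cls q = cls q' ↔ (toQ q).Equivalent (toQ q') := by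
  rw [cls_eq, isometric_iff]

instance : Zero (IQ K) := ⟨cls nil⟩

instance : Add (IQ K) := ⟨Quotient.map₂ orthSum (by
  intro a b h c d h'
  change Isometric _ _ at h
  change Isometric _ _ at h'
  change Isometric _ _
  rw [isometric_iff] at *
  exact (orthSum_equiv _ _).trans ((h.prod h').trans (orthSum_equiv _ _).symm))⟩

instance : SMul K (IQ K) := ⟨fun a => Quotient.map (smul a) (by
  intro c d h'
  change Isometric _ _ at h'
  change Isometric _ _
  rw [isometric_iff] at *
  exact (smul_toQ _ _).trans ((smul_equiv a h').trans (smul_toQ _ _).symm))⟩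

theorem cls_add (q q' : QF K) : cls (orthSum q q') = cls q + cls q' := rfl
theorem cls_smul (a : K) (q : QF K) : cls (smul a q) = a • cls q := rfl
theorem cls_nil : cls (nil : QF K) = 0 := rfl

theorem ind {p : IQ K → Prop} (h : ∀ q, p (cls q)) (z : IQ K) : p z := Quotient.inductionOn z h

theorem cls_eq_zero {q : QF K} (h : q.dim = 0) : cls q = 0 := by
  obtain ⟨d, c⟩ := q
  dsimp at h
  subst h
  rw [← cls_nil, cls_eq]
  exact ⟨LinearEquiv.refl _ _, fun x => by simp [QF.eval, nil]⟩

/-- A `QF` representing a quadratic form on a finite-dimensional space. -/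
noncomputable def ofQ {V : Type*} [AddCommGroup V] [Module K V] [FiniteDimensional K V]
    (Q : QuadraticForm K V) : QF K :=
  ⟨Module.finrank K V, fun i j => Q.toBilin (Module.finBasis K V) (Module.finBasis K V i)
    (Module.finBasis K V j)⟩

section clsQ
variable {V W : Type*} [AddCommGroup V] [Module K V] [FiniteDimensional K V]
  [AddCommGroup W] [Module K W] [FiniteDimensional K W]

theorem toQ_ofQ (Q : QuadraticForm K V) : (toQ (ofQ Q)).Equivalent Q := by
  refine ⟨⟨(Module.finBasis K V).equivFun.symm,
    fun (x : Fin (Module.finrank K V) → K) => ?_⟩⟩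
  change Q ((Module.finBasis K V).equivFun.symm x) = toQ (ofQ Q) x
  refine Eq.trans ?_ (toQ_apply (ofQ Q) x).symm
  conv_lhs => rw [← Q.toQuadraticMap_toBilin (Module.finBasis K V)]
  rw [LinearMap.BilinMap.toQuadraticMap_apply, Module.Basis.equivFun_symm_apply]
  simp only [map_sum, LinearMap.sum_apply, map_smul, LinearMap.smul_apply, QF.eval, ofQ,
    smul_eq_mul]
  simp only [Finset.mul_sum]
  rw [Finset.sum_comm]
  refine Finset.sum_congr rfl fun i _ => Finset.sum_congr rfl fun j _ => by ring

/-- class of a quadratic form on a f.d. space -/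
noncomputable def clsQ (Q : QuadraticForm K V) : IQ K := cls (ofQ Q)

theorem clsQ_eq {Q : QuadraticForm K V} {Q' : QuadraticForm K W} :
    clsQ Q = clsQ Q' ↔ Q.Equivalent Q' := by
  unfold clsQ
  rw [cls_eq']
  exact ⟨fun h => (toQ_ofQ Q).symm.trans (h.trans (toQ_ofQ Q')),
    fun h => (toQ_ofQ Q).trans (h.trans (toQ_ofQ Q').symm)⟩

theorem cls_toQ (q : QF K) : cls q = clsQ (toQ q) := by
  unfold clsQ
  rw [cls_eq']
  exact (toQ_ofQ _).symm

theorem clsQ_add (Q : QuadraticForm K V) (Q' : QuadraticForm K W) :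
    clsQ Q + clsQ Q' = clsQ (Q.prod Q') := by
  unfold clsQ
  rw [← cls_add, cls_eq']
  exact (orthSum_equiv _ _).trans (((toQ_ofQ _).prod (toQ_ofQ _)).trans (toQ_ofQ _).symm)

theorem clsQ_smul (a : K) (Q : QuadraticForm K V) : a • clsQ Q = clsQ (a • Q) := by
  unfold clsQ
  rw [← cls_smul, cls_eq']
  exact (smul_toQ _ _).trans ((smul_equiv a (toQ_ofQ _)).trans (toQ_ofQ _).symm)

theorem clsQ_zero [Subsingleton V] (Q : QuadraticForm K V) : clsQ Q = 0 :=
  cls_eq_zero Module.finrank_zero_of_subsingleton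

theorem clsQ_mk {Q : QuadraticForm K V} {Q' : QuadraticForm K W} (e : V ≃ₗ[K] W)
    (h : ∀ x, Q' (e x) = Q x) : clsQ Q = clsQ Q' := clsQ_eq.2 (equiv_mk e h)

end clsQ

theorem zero_add' (a : IQ K) : 0 + a = a := by
  induction a using ind
  rename_i q
  rw [cls_toQ, ← clsQ_zero (0 : QuadraticForm K (Fin 0 → K)), clsQ_add]
  exact clsQ_mk (LinearEquiv.uniqueProd) fun x => by
    simp [prod_apply]

theorem add_comm' (a b : IQ K) : a + b = b + a := by
  induction a using ind; induction b using ind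
  rw [cls_toQ, cls_toQ, clsQ_add, clsQ_add, clsQ_eq]
  exact ⟨IsometryEquiv.prodComm _ _⟩

instance : AddCommMonoid (IQ K) where
  add_assoc a b c := by
    induction a using ind; induction b using ind; induction c using ind
    simp only [cls_toQ, clsQ_add]
    exact clsQ_mk (LinearEquiv.prodAssoc K _ _ _) fun x => by
      simp [prod_apply, add_assoc]
  add_comm := add_comm'
  zero_add := zero_add'
  add_zero a := by rw [add_comm', zero_add']
  nsmul := nsmulRec

theorem smul_add' (a : K) (x y : IQ K) : a • (x + y) = a • x + a • y := by
  induction x using ind; induction y using ind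
  simp only [cls_toQ, clsQ_add, clsQ_smul]
  exact clsQ_mk (LinearEquiv.refl _ _) fun x => by
    rw [LinearEquiv.refl_apply, smul_apply, prod_apply, prod_apply, smul_add]; rfl

theorem smul_smul' (a b : K) (x : IQ K) : a • b • x = (a * b) • x := by
  induction x using ind
  simp only [cls_toQ, clsQ_smul, smul_smul]

theorem one_smul' (x : IQ K) : (1 : K) • x = x := by
  induction x using ind
  simp only [cls_toQ, clsQ_smul, one_smul]

/-- squares act trivially -/
theorem sq_smul (a : K) (ha : a ≠ 0) (x : IQ K) : (a * a) • x = x := by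
  induction x using ind
  simp only [cls_toQ, clsQ_smul]
  exact clsQ_mk (LinearEquiv.smulOfNeZero K _ a ha) fun x => by
    simp [QuadraticMap.map_smul]

theorem R2_aux {V : Type*} [AddCommGroup V] [Module K V] [FiniteDimensional K V]
    (h2 : (2 : K) = 0) (u v : K) (h : u + v ≠ 0) (Q : QuadraticForm K V) :
    clsQ (((u + v) • Q).prod ((u * v * (u + v)) • Q)) = clsQ ((u • Q).prod (v • Q)) := by
  refine clsQ_mk (V := V × V) (W := V × V)
    { toFun := fun p => (p.1 + v • p.2, p.1 + u • p.2)
      invFun := fun p => ((u + v)⁻¹ • (u • p.1 + v • p.2), (u + v)⁻¹ • (p.1 + p.2))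
      map_add' := fun x y => by
        refine Prod.ext ?_ ?_ <;> simp only [Prod.fst_add, Prod.snd_add] <;> module
      map_smul' := fun c x => by
        refine Prod.ext ?_ ?_ <;>
          simp only [Prod.smul_fst, Prod.smul_snd, RingHom.id_apply] <;> module
      left_inv := fun x => by
        refine Prod.ext ?_ ?_
        · have : u • (x.1 + v • x.2) + v • (x.1 + u • x.2) =
            (u + v) • x.1 + ((2 : K) * (u * v)) • x.2 := by module
          simp only [this, h2, zero_mul, zero_smul, add_zero, smul_smul, inv_mul_cancel₀ h,
            one_smul]
        · have : (x.1 + v • x.2) + (x.1 + u • x.2) =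
            (2 : K) • x.1 + (u + v) • x.2 := by module
          simp only [this, h2, zero_smul, zero_add, smul_smul, inv_mul_cancel₀ h, one_smul]
      right_inv := fun x => by
        refine Prod.ext ?_ ?_
        · have : (u + v)⁻¹ • (u • x.1 + v • x.2) + v • (u + v)⁻¹ • (x.1 + x.2) =
            ((u + v)⁻¹ * (u + v)) • x.1 + ((2 : K) * ((u + v)⁻¹ * v)) • x.2 := by module
          simp only [this, h2, zero_mul, zero_smul, add_zero, inv_mul_cancel₀ h, one_smul]
        · have : (u + v)⁻¹ • (u • x.1 + v • x.2) + u • (u + v)⁻¹ • (x.1 + x.2) =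
            ((2 : K) * ((u + v)⁻¹ * u)) • x.1 + ((u + v)⁻¹ * (u + v)) • x.2 := by module
          simp only [this, h2, zero_mul, zero_smul, zero_add, inv_mul_cancel₀ h, one_smul] } ?_
  rintro ⟨x, y⟩
  change u * Q (x + v • y) + v * Q (x + u • y) = (u + v) * Q x + (u * v * (u + v)) * Q y
  rw [QuadraticMap.map_add Q, QuadraticMap.map_add Q, QuadraticMap.map_smul, QuadraticMap.map_smul,
    polar_smul_right, polar_smul_right, smul_eq_mul, smul_eq_mul, smul_eq_mul, smul_eq_mul]
  linear_combination (u * v * polar Q x y) * h2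

theorem R2 [CharP K 2] (u v : K) (h : u + v ≠ 0) (z : IQ K) :
    u • z + v • z = (u + v) • z + (u * v * (u + v)) • z := by
  induction z using ind
  simp only [cls_toQ, clsQ_add, clsQ_smul]
  exact (R2_aux CharTwo.two_eq_zero u v h _).symm

end basics

section bins
variable {K : Type*} [Field K]

/-- binary form on `K × K` -/
noncomputable def binQ (a b : K) : QuadraticForm K (K × K) :=
  a • linMulLin (LinearMap.fst K K K) (LinearMap.fst K K K)
    + linMulLin (LinearMap.fst K K K) (LinearMap.snd K K K)
    + b • linMulLin (LinearMap.snd K K K) (LinearMap.snd K K K)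

theorem binQ_apply (a b : K) (p : K × K) :
    binQ a b p = a * (p.1 * p.1) + p.1 * p.2 + b * (p.2 * p.2) := by
  simp [binQ]

/-- class of `[a,b]` -/
def bn (a b : K) : IQ K := cls (bin a b)

theorem bn_eq (a b : K) : bn a b = clsQ (binQ a b) := by
  unfold bn
  rw [cls_toQ]
  refine clsQ_mk (LinearEquiv.finTwoArrow K K) fun (x : Fin 2 → K) => ?_
  refine Eq.trans ?_ (toQ_apply (bin a b) x).symm
  rw [binQ_apply]
  change a * (x 0 * x 0) + x 0 * x 1 + b * (x 1 * x 1) = ∑ i : Fin 2, ∑ j : Fin 2,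
    (!![a, 1; 0, b] : Matrix (Fin 2) (Fin 2) K) i j * x i * x j
  simp [Fin.sum_univ_two]
  ring

theorem bn_swap (a b : K) : bn a b = bn b a := by
  rw [bn_eq, bn_eq]
  refine clsQ_mk (LinearEquiv.prodComm K K K) fun x => ?_
  simp only [binQ_apply, LinearEquiv.prodComm_apply, Prod.fst_swap, Prod.snd_swap]
  ring

theorem bn_smul (k c x : K) (hk : k ≠ 0) : k • bn c x = bn (k * c) (x / k) := by
  rw [bn_eq, bn_eq, clsQ_smul]
  refine clsQ_mk ((LinearEquiv.refl K K).prodCongr (LinearEquiv.smulOfNeZero K K k hk))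
    fun x => ?_
  simp [binQ_apply]
  field_simp

variable [CharP K 2]

theorem bn_shift (c x y : K) : bn c x = bn c (x + y + c * y ^ 2) := by
  have h2 : (2 : K) = 0 := CharTwo.two_eq_zero
  rw [bn_eq, bn_eq]
  symm
  refine clsQ_mk (V := K × K) (W := K × K)
    { toFun := fun p => (p.1 + y * p.2, p.2)
      invFun := fun p => (p.1 - y * p.2, p.2)
      map_add' := fun p q => by ext <;> simp; ring
      map_smul' := fun p q => by ext <;> simp; ring
      left_inv := fun p => by ext <;> simp
      right_inv := fun p => by ext <;> simp } fun p => ?_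
  change binQ c x (p.1 + y * p.2, p.2) = _
  simp only [binQ_apply]
  linear_combination (c * p.1 * y * p.2) * h2

theorem bn_R1 (c x d y : K) : bn c x + bn d y = bn (c + d) x + bn d (x + y) := by
  have h2 : (2 : K) = 0 := CharTwo.two_eq_zero
  simp only [bn_eq, clsQ_add]
  symm
  refine clsQ_mk (V := (K × K) × (K × K)) (W := (K × K) × (K × K))
    { toFun := fun p => ((p.1.1, p.1.2 + p.2.2), (p.1.1 + p.2.1, p.2.2))
      invFun := fun p => ((p.1.1, p.1.2 - p.2.2), (p.2.1 - p.1.1, p.2.2))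
      map_add' := fun p q => by ext <;> simp <;> ring
      map_smul' := fun p q => by ext <;> simp <;> ring
      left_inv := fun p => by ext <;> simp
      right_inv := fun p => by ext <;> simp } fun p => ?_
  change (binQ c x).prod (binQ d y) ((p.1.1, p.1.2 + p.2.2), (p.1.1 + p.2.1, p.2.2)) = _
  simp only [binQ_apply, prod_apply]
  linear_combination (p.1.1 * p.2.2 + x * p.1.2 * p.2.2 + d * p.1.1 * p.2.1) * h2

theorem bn_round (b p q : K) (h : p * p + p * q + b * (q * q) ≠ 0) :
    (p * p + p * q + b * (q * q)) • bn 1 b = bn 1 b := by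
  have h2 : (2 : K) = 0 := CharTwo.two_eq_zero
  simp only [bn_eq, clsQ_smul]
  set u := p * p + p * q + b * (q * q) with hu
  refine clsQ_mk (V := K × K) (W := K × K)
    { toFun := fun x => (p * x.1 + b * q * x.2, p * x.2 + q * x.1 + q * x.2)
      invFun := fun x => (u⁻¹ * ((p + q) * x.1 + b * q * x.2),
        u⁻¹ * ((p + q) * x.2 + q * x.1 + q * x.2))
      map_add' := fun p q => by ext <;> simp <;> ring
      map_smul' := fun p q => by ext <;> simp <;> ring
      left_inv := fun x => by
        ext <;> simp only <;> field_simp <;> rw [hu]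
        · linear_combination (b * q * p * x.2 + b * q ^ 2 * x.2) * h2
        · linear_combination (p * q * x.2 + q * p * x.1 + q ^ 2 * x.1 + q ^ 2 * x.2) * h2
      right_inv := fun x => by
        ext <;> simp only <;> field_simp <;> rw [hu]
        · linear_combination (b * q * p * x.2 + b * q ^ 2 * x.2) * h2
        · linear_combination (p * q * x.2 + q * p * x.1 + q ^ 2 * x.1 + q ^ 2 * x.2) * h2 } fun x => ?_
  change binQ 1 b (p * x.1 + b * q * x.2, p * x.2 + q * x.1 + q * x.2) = u * binQ 1 b x
  simp only [binQ_apply, hu]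
  grind

/-- every binary form is a nonzero multiple of a norm form -/
theorem bn_norm (c x : K) : ∃ k b : K, k ≠ 0 ∧ bn c x = k • bn 1 b := by
  by_cases hc : c = 0
  · refine ⟨1, 0, one_ne_zero, ?_⟩
    rw [one_smul', hc, bn_shift 0 x (x + 1), bn_swap]
    have h2 : (2 : K) = 0 := CharTwo.two_eq_zero
    congr 1
    linear_combination x * h2
  · refine ⟨c, c * x, hc, ?_⟩
    rw [bn_smul _ _ _ hc]
    congr 1
    · ring
    · field_simp

end bins

section invariants
variable {K : Type*} [Field K]

/-- represented values -/
def Rep (z : IQ K) (u : K) : Prop := ∃ q, cls q = z ∧ ∃ x, toQ q x = u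

/-- self-orthogonal subspace with values in `S` -/
def LagQ {V : Type*} [AddCommGroup V] [Module K V] (S : AddSubgroup K)
    (Q : QuadraticForm K V) : Prop :=
  ∃ L : Submodule K V, (∀ x ∈ L, Q x ∈ S) ∧ ∀ x, x ∈ L ↔ ∀ y ∈ L, polar Q x y = 0

/-- class version -/
def Lag (S : AddSubgroup K) (z : IQ K) : Prop := ∃ q, cls q = z ∧ LagQ S (toQ q)

/-- nonsingularity -/
def NSQ {V : Type*} [AddCommGroup V] [Module K V] (Q : QuadraticForm K V) : Prop :=
  ∀ x, (∀ y, polar Q x y = 0) → x = 0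

/-- class version -/
def NS (z : IQ K) : Prop := ∃ q, cls q = z ∧ NSQ (toQ q)

/-- dimension -/
def dm (z : IQ K) : ℕ := Quotient.lift (fun q : QF K => q.dim) (by
  rintro a b ⟨e, -⟩
  simpa using e.finrank_eq) z

section
variable {V W : Type*} [AddCommGroup V] [Module K V] [AddCommGroup W] [Module K W]

theorem polar_iso {Q : QuadraticForm K V} {Q' : QuadraticForm K W}
    (e : Q.IsometryEquiv Q') (x y : V) : polar Q' (e x) (e y) = polar Q x y := by
  have h : e x + e y = e (x + y) := (map_add e.toLinearEquiv x y).symm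
  simp only [polar, h, e.map_app]

theorem LagQ.equiv {S : AddSubgroup K} {Q : QuadraticForm K V} {Q' : QuadraticForm K W}
    (h : Q.Equivalent Q') (hL : LagQ S Q) : LagQ S Q' := by
  obtain ⟨e⟩ := h
  obtain ⟨L, h1, h2⟩ := hL
  have key : ∀ y, y ∈ L.map (e.toLinearEquiv : V →ₗ[K] W) ↔ e.symm y ∈ L := fun y => by
    rw [Submodule.mem_map_equiv]; rfl
  refine ⟨L.map (e.toLinearEquiv : V →ₗ[K] W), fun x hx => ?_, fun x => ?_⟩
  · have := h1 _ ((key x).1 hx)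
    rwa [e.symm.map_app] at this
  · rw [key, h2]
    constructor
    · intro h y hy
      rw [← polar_iso e.symm]
      exact h _ ((key y).1 hy)
    · intro h y hy
      have := h (e y) ((key _).2 (by
        have : e.symm (e y) = y := e.toLinearEquiv.symm_apply_apply y
        rwa [this]))
      rw [← polar_iso e.symm] at this
      have h' : e.symm (e y) = y := e.toLinearEquiv.symm_apply_apply y
      rwa [h'] at this

theorem NSQ.equiv {Q : QuadraticForm K V} {Q' : QuadraticForm K W}
    (h : Q.Equivalent Q') (hL : NSQ Q) : NSQ Q' := by
  obtain ⟨e⟩ := h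
  intro x hx
  have : e.symm x = 0 := hL _ fun y => by
    have := hx (e y)
    rw [← polar_iso e.symm] at this
    have h' : e.symm (e y) = y := e.toLinearEquiv.symm_apply_apply y
    rwa [h'] at this
  exact (LinearEquiv.map_eq_zero_iff e.symm.toLinearEquiv).1 this

variable [FiniteDimensional K V] [FiniteDimensional K W]

theorem rep_iff (Q : QuadraticForm K V) (u : K) : Rep (clsQ Q) u ↔ ∃ x, Q x = u := by
  constructor
  · rintro ⟨q, h, x, hx⟩
    rw [cls_toQ, clsQ_eq] at h
    obtain ⟨e⟩ := h
    exact ⟨e x, by rw [e.map_app, hx]⟩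
  · rintro ⟨x, hx⟩
    obtain ⟨e⟩ := toQ_ofQ Q
    exact ⟨ofQ Q, rfl, e.symm x, by rw [e.symm.map_app, hx]⟩

theorem lag_iff (S : AddSubgroup K) (Q : QuadraticForm K V) : Lag S (clsQ Q) ↔ LagQ S Q := by
  constructor
  · rintro ⟨q, h, hx⟩
    rw [cls_toQ, clsQ_eq] at h
    exact hx.equiv h
  · intro h
    exact ⟨ofQ Q, rfl, h.equiv (toQ_ofQ Q).symm⟩

theorem ns_iff (Q : QuadraticForm K V) : NS (clsQ Q) ↔ NSQ Q := by
  constructor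
  · rintro ⟨q, h, hx⟩
    rw [cls_toQ, clsQ_eq] at h
    exact hx.equiv h
  · intro h
    exact ⟨ofQ Q, rfl, h.equiv (toQ_ofQ Q).symm⟩

theorem NSQ.prod {Q : QuadraticForm K V} {Q' : QuadraticForm K W} :
    NSQ (Q.prod Q') ↔ NSQ Q ∧ NSQ Q' := by
  constructor
  · intro h
    refine ⟨fun x hx => ?_, fun x hx => ?_⟩
    · have := h (x, 0) fun y => by simp [hx]
      simpa using this
    · have := h (0, x) fun y => by simp [hx]
      simpa using this
  · rintro ⟨h, h'⟩ ⟨x, x'⟩ hx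
    refine Prod.ext (h _ fun y => ?_) (h' _ fun y => ?_)
    · simpa using hx (y, 0)
    · simpa using hx (0, y)

end

theorem ns_cls (q : QF K) : NS (cls q) ↔ q.Nonsingular := by
  rw [nonsingular_iff, cls_toQ, ns_iff]; rfl

theorem ns_add (z w : IQ K) : NS (z + w) ↔ NS z ∧ NS w := by
  induction z using ind; induction w using ind
  simp only [cls_toQ, clsQ_add, ns_iff, NSQ.prod]

theorem ns_smul (a : K) (ha : a ≠ 0) (z : IQ K) (h : NS z) : NS (a • z) := by
  induction z using ind
  simp only [cls_toQ, clsQ_smul, ns_iff] at *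
  intro x hx
  refine h x fun y => ?_
  have := hx y
  rw [FunLike.coe_smul, polar_smul] at this
  simpa [ha] using this

theorem ns_bn (a b : K) [CharP K 2] : NS (bn a b) := by
  rw [bn_eq, ns_iff]
  have h2 : (2 : K) = 0 := CharTwo.two_eq_zero
  intro x hx
  have h0 := hx (1, 0)
  have h1 := hx (0, 1)
  simp only [polar, binQ_apply] at h0 h1
  refine Prod.ext ?_ ?_
  · simp at h1 ⊢
    linear_combination h1 - b * x.2 * h2
  · simp at h0 ⊢
    linear_combination h0 - a * x.1 * h2

theorem dm_cls (q : QF K) : dm (cls q) = q.dim := rfl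

theorem dm_add (z w : IQ K) : dm (z + w) = dm z + dm w := by
  induction z using ind; induction w using ind
  rfl

theorem dm_smul (a : K) (z : IQ K) : dm (a • z) = dm z := by
  induction z using ind
  rfl

theorem dm_bn (a b : K) : dm (bn a b) = 2 := rfl

theorem dm_zero (z : IQ K) (h : dm z = 0) : z = 0 := by
  induction z using ind
  exact cls_eq_zero h

theorem dm_clsQ {V : Type*} [AddCommGroup V] [Module K V] [FiniteDimensional K V]
    (Q : QuadraticForm K V) : dm (clsQ Q) = Module.finrank K V := rfl

theorem rep_add (z w : IQ K) (u : K) : Rep (z + w) u ↔ ∃ a b, Rep z a ∧ Rep w b ∧ a + b = u := by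
  induction z using ind; induction w using ind
  simp only [cls_toQ, clsQ_add, rep_iff, prod_apply]
  constructor
  · rintro ⟨x, hx⟩
    exact ⟨_, _, ⟨_, rfl⟩, ⟨_, rfl⟩, hx⟩
  · rintro ⟨_, _, ⟨x, rfl⟩, ⟨y, rfl⟩, h⟩
    exact ⟨(x, y), h⟩

theorem rep_smul (z : IQ K) (a u : K) : Rep (a • z) u ↔ ∃ b, Rep z b ∧ a * b = u := by
  induction z using ind
  simp only [cls_toQ, clsQ_smul, rep_iff]
  constructor
  · rintro ⟨x, hx⟩
    exact ⟨_, ⟨x, rfl⟩, hx⟩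
  · rintro ⟨_, ⟨x, rfl⟩, hx⟩
    exact ⟨x, hx⟩

end invariants

section lagr
variable {K : Type*} [Field K]

theorem LagQ.reduce {V W : Type*} [AddCommGroup V] [Module K V] [AddCommGroup W] [Module K W]
    [FiniteDimensional K V] {S : AddSubgroup K} {Q : QuadraticForm K V} {Q' : QuadraticForm K W}
    (h : LagQ S (Q.prod Q')) (hM : LagQ S Q) : LagQ S Q' := by
  obtain ⟨L, hLS, hL⟩ := h
  obtain ⟨M, hMS, hM⟩ := hM
  have key : ∀ w, w ∈ (L ⊓ M.prod ⊤).map (LinearMap.snd K V W) ↔ ∃ u ∈ M, (u, w) ∈ L := by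
    intro w
    simp only [Submodule.mem_map, Submodule.mem_inf, Submodule.mem_prod, Submodule.mem_top,
      and_true, LinearMap.snd_apply]
    constructor
    · rintro ⟨⟨u, w'⟩, ⟨h1, h2⟩, rfl⟩
      exact ⟨u, h2, h1⟩
    · rintro ⟨u, h2, h1⟩
      exact ⟨(u, w), ⟨h1, h2⟩, rfl⟩
  refine ⟨(L ⊓ M.prod ⊤).map (LinearMap.snd K V W), fun w hw => ?_, fun w => ⟨fun hw w' hw' => ?_, fun hw => ?_⟩⟩
  · obtain ⟨u, hu, huw⟩ := (key w).1 hw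
    have h1 := hLS _ huw
    rw [prod_apply] at h1
    simpa using S.sub_mem h1 (hMS u hu)
  · obtain ⟨u, hu, huw⟩ := (key w).1 hw
    obtain ⟨u', hu', huw'⟩ := (key w').1 hw'
    have h1 := (hL _).1 huw _ huw'
    rw [polar_prod] at h1
    simpa [(hM _).1 hu _ hu'] using h1
  · rw [key]
    let g : L →ₗ[K] Module.Dual K M :=
      (polarBilin Q).compl₁₂ ((LinearMap.fst K V W).comp L.subtype) M.subtype
    let f : Module.Dual K L := (polarBilin Q' w).comp ((LinearMap.snd K V W).comp L.subtype)
    have hf : f ∈ (LinearMap.ker g).dualAnnihilator := by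
      rw [Submodule.mem_dualAnnihilator]
      intro x hx
      rw [LinearMap.mem_ker] at hx
      refine hw _ ((key _).2 ⟨x.1.1, ?_, x.2⟩)
      rw [hM]
      intro y hy
      exact LinearMap.congr_fun hx ⟨y, hy⟩
    rw [← LinearMap.range_dualMap_eq_dualAnnihilator_ker] at hf
    obtain ⟨θ, hθ⟩ := hf
    let u : M := (Module.evalEquiv K M).symm θ
    have hu : ∀ ξ, θ ξ = ξ u := by
      intro ξ
      have := LinearEquiv.apply_symm_apply (Module.evalEquiv K M) θ
      conv_lhs => rw [← this]
      rfl
    refine ⟨-u, M.neg_mem u.2, ?_⟩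
    rw [hL]
    intro y hy
    have h1 : polar Q' w y.2 = polar Q y.1 u := by
      have := LinearMap.congr_fun hθ ⟨y, hy⟩
      rw [LinearMap.dualMap_apply, hu] at this
      exact this.symm
    rw [polar_prod]
    simp only [polar_neg_left]
    rw [h1, polar_comm Q y.1]
    ring

theorem LagQ.prod {V W : Type*} [AddCommGroup V] [Module K V] [AddCommGroup W] [Module K W]
    {S : AddSubgroup K} {Q : QuadraticForm K V} {Q' : QuadraticForm K W}
    (h : LagQ S Q) (h' : LagQ S Q') : LagQ S (Q.prod Q') := by
  obtain ⟨L, hLS, hL⟩ := h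
  obtain ⟨M, hMS, hM⟩ := h'
  refine ⟨L.prod M, fun x hx => ?_, fun x => ⟨fun hx y hy => ?_, fun hx => ?_⟩⟩
  · rw [Submodule.mem_prod] at hx
    exact S.add_mem (hLS _ hx.1) (hMS _ hx.2)
  · rw [Submodule.mem_prod] at hx hy
    rw [polar_prod, (hL _).1 hx.1 _ hy.1, (hM _).1 hx.2 _ hy.2, add_zero]
  · rw [Submodule.mem_prod, hL, hM]
    refine ⟨fun y hy => ?_, fun y hy => ?_⟩
    · simpa using hx (y, 0) (by simp [Submodule.mem_prod, hy])
    · simpa using hx (0, y) (by simp [Submodule.mem_prod, hy])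

theorem lag_reduce {S : AddSubgroup K} {z w : IQ K} (h : Lag S (z + w)) (hz : Lag S z) :
    Lag S w := by
  induction z using ind; induction w using ind
  simp only [cls_toQ, clsQ_add, lag_iff] at *
  exact h.reduce hz

theorem lag_add {S : AddSubgroup K} {z w : IQ K} (h : Lag S z) (hz : Lag S w) :
    Lag S (z + w) := by
  induction z using ind; induction w using ind
  simp only [cls_toQ, clsQ_add, lag_iff] at *
  exact h.prod hz

theorem lag_smul {S : AddSubgroup K} {z : IQ K} (a : K) (ha : a ≠ 0) (hS : ∀ s ∈ S, a * s ∈ S)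
    (h : Lag S z) : Lag S (a • z) := by
  induction z using ind
  simp only [cls_toQ, clsQ_smul, lag_iff] at *
  obtain ⟨L, h1, h2⟩ := h
  refine ⟨L, fun x hx => hS _ (h1 x hx), fun x => ?_⟩
  rw [h2]
  simp only [FunLike.coe_smul, polar_smul, smul_eq_mul, mul_eq_zero, ha, false_or]

theorem lag_zero (S : AddSubgroup K) : Lag S (0 : IQ K) := by
  rw [← clsQ_zero (0 : QuadraticForm K (Fin 0 → K)), lag_iff]
  exact ⟨⊥, fun x hx => by simp, fun x => ⟨fun _ y hy => by
    rw [(Submodule.mem_bot _).1 hy, polar_zero_right],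
    fun _ => (Submodule.mem_bot _).2 (Subsingleton.elim _ _)⟩⟩

variable [CharP K 2]

theorem lag_bn {S : AddSubgroup K} (hS : ∀ s ∈ S, ∀ t : K, s * (t * t) ∈ S) (c x : K)
    (hc : c ∈ S) : Lag S (bn c x) := by
  have h2 : (2 : K) = 0 := CharTwo.two_eq_zero
  rw [bn_eq, lag_iff]
  refine ⟨LinearMap.ker (LinearMap.snd K K K), fun y hy => ?_, fun y => ?_⟩
  · rw [LinearMap.mem_ker, LinearMap.snd_apply] at hy
    rw [binQ_apply, hy]
    simpa using hS c hc y.1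
  · simp only [LinearMap.mem_ker, LinearMap.snd_apply, polar, binQ_apply]
    constructor
    · intro hy z hz
      simp only [Prod.fst_add, Prod.snd_add, hy, hz]
      linear_combination (c * y.1 * z.1) * h2
    · intro h
      have := h (1, 0) rfl
      simp at this
      linear_combination this - c * y.1 * h2

/-- Splitting off a binary form containing a given vector. -/
theorem split {V : Type*} [AddCommGroup V] [Module K V] [FiniteDimensional K V]
    (Q : QuadraticForm K V) (hQ : NSQ Q) (v : V) (hv : v ≠ 0) :
    ∃ x z, clsQ Q = bn (Q v) x + z := by
  have h2 : (2 : K) = 0 := CharTwo.two_eq_zero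
  obtain ⟨f, hf⟩ : ∃ f, polar Q v f = 1 := by
    by_contra hcon
    refine hv (hQ v fun y => ?_)
    by_contra hy
    exact hcon ⟨(polar Q v y)⁻¹ • y, by rw [polar_smul_right]; simp [hy]⟩
  have hf' : polar Q f v = 1 := by rw [polar_comm, hf]
  have hvv : ∀ w, polar Q w w = 0 := fun w => by
    rw [polar_self, two_nsmul, ← two_mul, h2, zero_mul]
  let W : Submodule K V := LinearMap.ker (polarBilin Q v) ⊓ LinearMap.ker (polarBilin Q f)
  have hW : ∀ w ∈ W, polar Q v w = 0 ∧ polar Q f w = 0 := fun w hw => hw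
  refine ⟨Q f, clsQ (Q.comp W.subtype), ?_⟩
  rw [bn_eq, clsQ_add]
  symm
  let g : (K × K) × W →ₗ[K] V :=
    LinearMap.coprod (LinearMap.coprod (LinearMap.toSpanSingleton K V v)
      (LinearMap.toSpanSingleton K V f)) W.subtype
  have hg : ∀ p, g p = p.1.1 • v + p.1.2 • f + (p.2 : V) := fun p => rfl
  have hpv : ∀ p, polar Q v (g p) = p.1.2 := fun p => by
    rw [hg, polar_add_right, polar_add_right, polar_smul_right, polar_smul_right, hvv, hf,
      (hW _ p.2.2).1]
    simp
  have hpf : ∀ p, polar Q f (g p) = p.1.1 := fun p => by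
    rw [hg, polar_add_right, polar_add_right, polar_smul_right, polar_smul_right, hvv, hf',
      (hW _ p.2.2).2]
    simp
  have hbij : Function.Bijective g := by
    constructor
    · rw [injective_iff_map_eq_zero]
      intro p hp
      have h0 := hpv p
      have h1 := hpf p
      rw [hp, polar_zero_right] at h0 h1
      rw [hg, ← h0, ← h1] at hp
      simp at hp
      exact Prod.ext (Prod.ext h1.symm h0.symm) hp
    · intro y
      refine ⟨((polar Q f y, polar Q v y), ⟨y - polar Q f y • v - polar Q v y • f, ?_, ?_⟩), ?_⟩
      · change polar Q v _ = 0
        rw [polar_sub_right, polar_sub_right, polar_smul_right, polar_smul_right, hvv, hf]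
        simp
      · change polar Q f _ = 0
        rw [polar_sub_right, polar_sub_right, polar_smul_right, polar_smul_right, hvv, hf']
        simp
      · rw [hg]
        simp
  refine clsQ_mk (LinearEquiv.ofBijective g hbij) fun p => ?_
  rw [LinearEquiv.ofBijective_apply, hg, prod_apply, binQ_apply, QuadraticMap.map_add Q,
    QuadraticMap.map_add Q, QuadraticMap.map_smul, QuadraticMap.map_smul, polar_add_left,
    polar_smul_left, polar_smul_left, polar_smul_left, polar_smul_right, hf,
    (hW _ p.2.2).1, (hW _ p.2.2).2, QuadraticMap.comp_apply]
  simp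
  ring

/-- decomposition -/
theorem decomp (z : IQ K) (hz : NS z) (h0 : dm z ≠ 0) :
    ∃ c x z', z = bn c x + z' ∧ NS z' ∧ dm z = dm z' + 2 := by
  induction z using ind
  rename_i q
  have hz' := hz
  rw [cls_toQ, ns_iff] at hz'
  have : NeZero q.dim := ⟨h0⟩
  obtain ⟨x, z', h⟩ := split (toQ q) hz' (Pi.single 0 1) (by simp)
  rw [← cls_toQ] at h
  refine ⟨_, x, z', h, ?_, ?_⟩
  · rw [h, ns_add] at hz; exact hz.2
  · rw [h, dm_add, dm_bn, add_comm]

theorem decomp_lag {S : AddSubgroup K} (hS : ∀ s ∈ S, ∀ t : K, s * (t * t) ∈ S) (z : IQ K)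
    (hz : NS z) (h0 : dm z ≠ 0) (hL : Lag S z) :
    ∃ c x z', c ∈ S ∧ z = bn c x + z' ∧ NS z' ∧ Lag S z' ∧ dm z = dm z' + 2 := by
  induction z using ind
  rename_i q
  have hz' := hz
  have hL' := hL
  rw [cls_toQ, ns_iff] at hz'
  rw [cls_toQ, lag_iff] at hL'
  have : NeZero q.dim := ⟨h0⟩
  obtain ⟨L, h1, h2⟩ := hL'
  have hL0 : L ≠ ⊥ := by
    rintro rfl
    have : (Pi.single 0 1 : Fin q.dim → K) ∈ (⊥ : Submodule K (Fin q.dim → K)) := by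
      rw [h2]
      intro y hy
      rw [Submodule.mem_bot] at hy
      rw [hy, polar_zero_right]
    simp at this
  obtain ⟨v, hv, hv0⟩ := Submodule.exists_mem_ne_zero_of_ne_bot hL0
  obtain ⟨x, z', h⟩ := split (toQ q) hz' v hv0
  rw [← cls_toQ] at h
  refine ⟨_, x, z', h1 v hv, h, ?_, ?_, ?_⟩
  · rw [h, ns_add] at hz; exact hz.2
  · rw [h] at hL
    exact lag_reduce hL (lag_bn hS _ _ (h1 v hv))
  · rw [h, dm_add, dm_bn, add_comm]

end lagr

section pf
variable {K : Type*} [Field K]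

/-- Pfister multiples of classes -/
def pf (l : List K) (z : IQ K) : IQ K := l.foldr (fun a r => r + a • r) z

theorem pf_nil (z : IQ K) : pf [] z = z := rfl
theorem pf_cons (a : K) (l : List K) (z : IQ K) : pf (a :: l) z = pf l z + a • pf l z := rfl

theorem cls_pfTensor (l : List K) (q : QF K) : cls (pfTensor l q) = pf l (cls q) := by
  induction l with
  | nil => rfl
  | cons a l ih => rw [pf_cons, ← ih]; rfl

theorem pf_add (l : List K) (z w : IQ K) : pf l (z + w) = pf l z + pf l w := by
  induction l with
  | nil => rfl
  | cons a l ih =>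
    rw [pf_cons, pf_cons, pf_cons, ih, smul_add']
    exact add_add_add_comm _ _ _ _

theorem pf_smul (l : List K) (a : K) (z : IQ K) : pf l (a • z) = a • pf l z := by
  induction l with
  | nil => rfl
  | cons b l ih => rw [pf_cons, pf_cons, ih, smul_add', smul_smul', smul_smul', mul_comm]

theorem dm_pf (l : List K) (z : IQ K) : dm (pf l z) = 2 ^ l.length * dm z := by
  induction l with
  | nil => simp [pf_nil]
  | cons a l ih => rw [pf_cons, dm_add, dm_smul, ih, List.length_cons]; ring

theorem ns_pf (l : List K) (hl : ∀ c ∈ l, c ≠ 0) (z : IQ K) (hz : NS z) : NS (pf l z) := by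
  induction l with
  | nil => exact hz
  | cons a l ih =>
    have := ih fun c hc => hl c (List.mem_cons_of_mem _ hc)
    rw [pf_cons, ns_add]
    exact ⟨this, ns_smul a (hl a List.mem_cons_self) _ this⟩

theorem lag_pf {S : AddSubgroup K} (l : List K) (hl : ∀ c ∈ l, c ≠ 0)
    (hS : ∀ c ∈ l, ∀ s ∈ S, c * s ∈ S) (z : IQ K) (hz : Lag S z) : Lag S (pf l z) := by
  induction l with
  | nil => exact hz
  | cons a l ih =>
    have := ih (fun c hc => hl c (List.mem_cons_of_mem _ hc))
      (fun c hc => hS c (List.mem_cons_of_mem _ hc))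
    rw [pf_cons]
    exact lag_add this (lag_smul a (hl a List.mem_cons_self) (hS a List.mem_cons_self) this)

theorem rep_zero (u : K) (h : Rep (0 : IQ K) u) : u = 0 := by
  rw [← clsQ_zero (0 : QuadraticForm K (Fin 0 → K)), rep_iff] at h
  obtain ⟨x, hx⟩ := h
  simpa using hx.symm

variable [CharP K 2]

theorem pf_round (b : K) (l : List K) : ∀ u : K, u ≠ 0 → Rep (pf l (bn 1 b)) u →
    u • pf l (bn 1 b) = pf l (bn 1 b) := by
  induction l with
  | nil =>
    intro u hu h
    rw [pf_nil] at *
    rw [bn_eq, rep_iff] at h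
    obtain ⟨x, rfl⟩ := h
    rw [binQ_apply, one_mul] at *
    exact bn_round b _ _ hu
  | cons a l ih =>
    intro u hu h
    rw [pf_cons] at *
    rw [rep_add] at h
    obtain ⟨u1, v, h1, h2, rfl⟩ := h
    rw [rep_smul] at h2
    obtain ⟨u2, h2, rfl⟩ := h2
    generalize pf l (bn 1 b) = P at *
    by_cases hv : a * u2 = 0
    · rw [hv, add_zero] at hu ⊢
      rw [smul_add', smul_smul', mul_comm, ← smul_smul', ih _ hu h1]
    · have hu2 : u2 ≠ 0 := right_ne_zero_of_mul hv
      have ha : a ≠ 0 := left_ne_zero_of_mul hv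
      by_cases hu1 : u1 = 0
      · rw [hu1, zero_add]
        rw [smul_add', smul_smul', mul_right_comm, ← smul_smul', ← smul_smul', ih _ hu2 h2,
          sq_smul a ha, add_comm]
      · have e1 : P + a • P = u1 • P + (a * u2) • P := by
          rw [← smul_smul', ih _ hu2 h2, ih _ hu1 h1]
        conv_rhs => rw [e1, R2 _ _ hu]
        rw [smul_add', smul_smul']
        congr 1
        rw [show u1 * (a * u2) * (u1 + a * u2) = ((u1 + a * u2) * a) * u1 * u2 by ring,
          ← smul_smul' ((u1 + a * u2) * a * u1) u2, ih _ hu2 h2,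
          ← smul_smul' ((u1 + a * u2) * a) u1, ih _ hu1 h1]

theorem pf_rep_bin (l : List K) (c x u : K) (hu : u ≠ 0) (h : Rep (pf l (bn c x)) u) :
    ∃ x', pf l (bn c x) = pf l (bn u x') := by
  obtain ⟨k, b, hk, e⟩ := bn_norm c x
  rw [e, pf_smul] at h ⊢
  rw [rep_smul] at h
  obtain ⟨t, ht, rfl⟩ := h
  refine ⟨b / (k * t), ?_⟩
  rw [← pf_round b l t (right_ne_zero_of_mul hu) ht, smul_smul', ← pf_smul, bn_smul _ _ _ hu,
    mul_one]

theorem pf_rep (l : List K) (n : ℕ) : ∀ (z : IQ K) (e : K), dm z = n → NS z → e ≠ 0 →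
    Rep (pf l z) e → ∃ x z', pf l z = pf l (bn e x + z') ∧ NS z' ∧ dm z = dm z' + 2 := by
  induction n using Nat.strong_induction_on with
  | _ n ih =>
  intro z e hn hz he h
  by_cases h0 : dm z = 0
  · have h1 : pf l z = 0 := dm_zero _ (by rw [dm_pf, h0, mul_zero])
    rw [h1] at h
    exact absurd (rep_zero _ h) he
  obtain ⟨c, x, z', rfl, hz', hd⟩ := decomp z hz h0
  rw [pf_add, rep_add] at h
  obtain ⟨u, w, hu, hw, rfl⟩ := h
  by_cases hw0 : w = 0
  · rw [hw0, add_zero] at he ⊢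
    obtain ⟨x', hx'⟩ := pf_rep_bin l c x u he hu
    exact ⟨x', z', by rw [pf_add, pf_add, hx'], hz', hd⟩
  obtain ⟨y, z'', h1, hz'', hd'⟩ := ih (dm z') (by omega) z' w rfl hz' hw0 hw
  by_cases hu0 : u = 0
  · rw [hu0, zero_add]
    refine ⟨y, bn c x + z'', ?_, ?_, ?_⟩
    · rw [pf_add, h1, ← pf_add]
      congr 1
      exact add_left_comm _ _ _
    · rw [ns_add]; exact ⟨ns_bn _ _, hz''⟩
    · rw [hd, hd', dm_add, dm_bn]; omega
  · obtain ⟨x', hx'⟩ := pf_rep_bin l c x u hu0 hu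
    refine ⟨x', bn w (x' + y) + z'', ?_, ?_, ?_⟩
    · rw [pf_add, h1, hx', ← pf_add, ← add_assoc, ← add_assoc, bn_R1]
    · rw [ns_add]; exact ⟨ns_bn _ _, hz''⟩
    · rw [hd, hd', dm_add, dm_bn]; omega

theorem even_dm (n : ℕ) : ∀ z : IQ K, dm z = n → NS z → ∃ r, dm z = 2 * r := by
  induction n using Nat.strong_induction_on with
  | _ n ih =>
  intro z hn hz
  by_cases h0 : dm z = 0
  · exact ⟨0, by omega⟩
  obtain ⟨c, x, z', -, hz', hd⟩ := decomp z hz h0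
  obtain ⟨r, hr⟩ := ih (dm z') (by omega) z' rfl hz'
  exact ⟨r + 1, by omega⟩

theorem hyper (n : ℕ) : ∀ z : IQ K, dm z = n → NS z → Lag ⊥ z →
    ∃ k : ℕ, z = k • bn 0 0 ∧ dm z = 2 * k := by
  induction n using Nat.strong_induction_on with
  | _ n ih =>
  intro z hn hz hL
  by_cases h0 : dm z = 0
  · exact ⟨0, by rw [zero_nsmul]; exact dm_zero _ h0, by omega⟩
  obtain ⟨c, x, z', hc, h, hz', hL', hd⟩ := decomp_lag (S := ⊥) (by simp) z hz h0 hL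
  obtain ⟨r, hr, hr'⟩ := ih (dm z') (by omega) z' rfl hz' hL'
  refine ⟨r + 1, ?_, by omega⟩
  rw [AddSubgroup.mem_bot] at hc
  have h2 : (2 : K) = 0 := CharTwo.two_eq_zero
  have : bn 0 x = bn 0 0 := by
    rw [bn_shift 0 x x]
    congr 1
    linear_combination x * h2
  rw [h, hr, hc, this, succ_nsmul, add_comm]

theorem pf_hyp (l : List K) (hl : ∀ c ∈ l, c ≠ 0) (k : ℕ) :
    pf l (k • bn 0 0) = (2 ^ l.length * k) • bn 0 0 := by
  have aux : ∀ (a : K) (_ : a ≠ 0) (k : ℕ), a • (k • bn (0 : K) 0) = k • bn 0 0 := by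
    intro a ha k
    induction k with
    | zero =>
      rw [zero_nsmul]
      exact dm_zero _ (by rw [dm_smul]; rfl)
    | succ k ih => rw [succ_nsmul, smul_add', ih, bn_smul _ _ _ ha, mul_zero, zero_div]
  induction l with
  | nil => simp [pf_nil]
  | cons a l ih =>
    rw [pf_cons, ih fun c hc => hl c (List.mem_cons_of_mem _ hc),
      aux a (hl a List.mem_cons_self), ← add_nsmul, List.length_cons]
    congr 1
    ring

end pf

section basechange
variable {F K : Type*} [Field F] [Field K] (f : F →+* K)

/-- quadratic form of a matrix -/
noncomputable def mq {K : Type*} [Field K] {n : ℕ} (c : Matrix (Fin n) (Fin n) K) :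
    QuadraticForm K (Fin n → K) := (Matrix.toBilin' c).toQuadraticMap

theorem mq_map {n : ℕ} (c : Matrix (Fin n) (Fin n) F) (x : Fin n → F) :
    mq (c.map f) (f ∘ x) = f (mq c x) := by
  simp [mq, LinearMap.BilinMap.toQuadraticMap_apply, Matrix.toBilin'_apply]

theorem polar_mq_map {n : ℕ} (c : Matrix (Fin n) (Fin n) F) (x y : Fin n → F) :
    polar (mq (c.map f)) (f ∘ x) (f ∘ y) = f (polar (mq c) x y) := by
  have : f ∘ x + f ∘ y = f ∘ (x + y) := by ext; simp
  simp only [polar, this, mq_map, map_sub]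

theorem mq_baseChange {m n : ℕ} (c : Matrix (Fin n) (Fin n) F) (c' : Matrix (Fin m) (Fin m) F)
    (h : (mq c).Equivalent (mq c')) : (mq (c.map f)).Equivalent (mq (c'.map f)) := by
  obtain ⟨e⟩ := h
  let A := LinearMap.toMatrix' (e.toLinearEquiv : (Fin n → F) →ₗ[F] (Fin m → F))
  let B := LinearMap.toMatrix' (e.toLinearEquiv.symm : (Fin m → F) →ₗ[F] (Fin n → F))
  have hAB : A * B = 1 := by
    rw [← LinearMap.toMatrix'_comp]
    have hc : (e.toLinearEquiv : (Fin n → F) →ₗ[F] (Fin m → F)).comp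
        (e.toLinearEquiv.symm : (Fin m → F) →ₗ[F] (Fin n → F)) = LinearMap.id :=
      LinearMap.ext fun x => e.toLinearEquiv.apply_symm_apply x
    rw [hc, LinearMap.toMatrix'_id]
  have hBA : B * A = 1 := by
    rw [← LinearMap.toMatrix'_comp]
    have hc : (e.toLinearEquiv.symm : (Fin m → F) →ₗ[F] (Fin n → F)).comp
        (e.toLinearEquiv : (Fin n → F) →ₗ[F] (Fin m → F)) = LinearMap.id :=
      LinearMap.ext fun x => e.toLinearEquiv.symm_apply_apply x
    rw [hc, LinearMap.toMatrix'_id]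
  have hAB' : A.map f * B.map f = 1 := by
    rw [← Matrix.map_mul, hAB]; simp
  have hBA' : B.map f * A.map f = 1 := by
    rw [← Matrix.map_mul, hBA]; simp
  have key : (mq (c'.map f)).comp (Matrix.toLin' (A.map f)) = mq (c.map f) := by
    have hs : ∀ i, Matrix.toLin' (A.map f) (Pi.basisFun K (Fin n) i) =
        f ∘ (e (Pi.single i 1)) := by
      intro i
      ext j
      simp [A, LinearMap.toMatrix'_apply]
    have hs' : ∀ i, (Pi.basisFun K (Fin n) i) = f ∘ (Pi.single i 1 : Fin n → F) := by
      intro i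
      ext j
      simp [Pi.single_apply, apply_ite f]
    rw [← toQuadraticMap_toBilin (mq (c.map f)) (Pi.basisFun K (Fin n)),
      ← toQuadraticMap_toBilin ((mq (c'.map f)).comp _) (Pi.basisFun K (Fin n))]
    refine congrArg LinearMap.BilinMap.toQuadraticMap ?_
    refine (Pi.basisFun K (Fin n)).ext fun i => (Pi.basisFun K (Fin n)).ext fun j => ?_
    rw [toBilin_apply, toBilin_apply]
    have h1 : ∀ i, ((mq (c'.map f)).comp (Matrix.toLin' (A.map f))) (Pi.basisFun K (Fin n) i)
        = (mq (c.map f)) (Pi.basisFun K (Fin n) i) := by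
      intro i
      rw [comp_apply, hs, mq_map, hs', mq_map, e.map_app]
    have h2 : polar ((mq (c'.map f)).comp (Matrix.toLin' (A.map f))) (Pi.basisFun K (Fin n) i)
        (Pi.basisFun K (Fin n) j)
        = polar (mq (c.map f)) (Pi.basisFun K (Fin n) i) (Pi.basisFun K (Fin n) j) := by
      have : polar ((mq (c'.map f)).comp (Matrix.toLin' (A.map f))) (Pi.basisFun K (Fin n) i)
        (Pi.basisFun K (Fin n) j) = polar (mq (c'.map f))
          (Matrix.toLin' (A.map f) (Pi.basisFun K (Fin n) i))
          (Matrix.toLin' (A.map f) (Pi.basisFun K (Fin n) j)) := by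
        simp only [polar, comp_apply, map_add]
      rw [this, hs, hs, polar_mq_map, hs', hs', polar_mq_map, polar_iso e]
    rw [h1, h2]
  refine equiv_mk (Matrix.toLin'OfInv hBA' hAB') fun x => ?_
  rw [← key]
  rfl

/-- base change of classes -/
def mapI (z : IQ F) : IQ K := Quotient.map (QF.map f) (by
  intro a b h
  change Isometric _ _ at h
  change Isometric _ _
  rw [isometric_iff] at *
  exact mq_baseChange f a.c b.c h) z

theorem mapI_cls (q : QF F) : mapI f (cls q) = cls (q.map f) := rfl

theorem mapI_add (z w : IQ F) : mapI f (z + w) = mapI f z + mapI f w := by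
  induction z using ind; induction w using ind
  rename_i q q'
  rw [← cls_add, mapI_cls, mapI_cls, mapI_cls, ← cls_add]
  have : (orthSum q q').map f = orthSum (q.map f) (q'.map f) := by
    unfold orthSum QF.map
    congr 1
    ext i j
    simp only [Matrix.reindex_apply, Matrix.submatrix_apply]
    rcases finSumFinEquiv.symm i with i | i <;> rcases finSumFinEquiv.symm j with j | j <;> simp <;> rfl
  rw [this]

theorem mapI_smul (a : F) (z : IQ F) : mapI f (a • z) = f a • mapI f z := by
  induction z using ind
  rename_i q
  rw [← cls_smul, mapI_cls, mapI_cls, ← cls_smul]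
  have : (smul a q).map f = smul (f a) (q.map f) := by
    unfold smul QF.map
    congr 1
    ext i j
    simp
    rfl
  rw [this]

theorem mapI_bn (a b : F) : mapI f (bn a b) = bn (f a) (f b) := by
  unfold bn
  rw [mapI_cls]
  have : (bin a b).map f = bin (f a) (f b) := by
    unfold bin QF.map
    congr 1
    ext i j
    fin_cases i <;> fin_cases j <;> simp
  rw [this]

theorem mapI_zero : mapI f 0 = 0 := dm_zero _ rfl

theorem dm_mapI (z : IQ F) : dm (mapI f z) = dm z := by
  induction z using ind
  rfl

theorem mapI_pf (l : List F) (z : IQ F) : mapI f (pf l z) = pf (l.map fun c => f c) (mapI f z) := by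
  induction l with
  | nil => rfl
  | cons a l ih => rw [List.map_cons, pf_cons, pf_cons, mapI_add, mapI_smul, ih]

theorem ns_of_mapI (z : IQ F) (h : NS (mapI f z)) : NS z := by
  induction z using ind
  rename_i q
  rw [mapI_cls, cls_toQ, ns_iff] at h
  rw [cls_toQ, ns_iff]
  intro x hx
  have h1 := h (f ∘ x) (by
    intro (y : Fin q.dim → K)
    change polar (mq (q.c.map f)) (f ∘ x) y = 0
    have : polarBilin (mq (q.c.map f)) (f ∘ x) = 0 := by
      refine (Pi.basisFun K (Fin q.dim)).ext fun i => ?_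
      have hs' : (Pi.basisFun K (Fin q.dim) i) = f ∘ (Pi.single i 1 : Fin q.dim → F) := by
        ext j
        simp [Pi.single_apply, apply_ite f]
      rw [hs']
      change polar (mq (q.c.map f)) (f ∘ x) _ = 0
      rw [polar_mq_map]
      have : polar (mq q.c) x (Pi.single i 1) = 0 := hx _
      rw [this, map_zero]
    exact LinearMap.congr_fun this y)
  ext i
  have := congrFun h1 i
  exact (map_eq_zero f).1 this

/-- the image of the base field -/
def rg : AddSubgroup K := f.range.toAddSubgroup

theorem mem_rg (x : K) : x ∈ rg f ↔ ∃ y, f y = x := Iff.rfl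

variable [CharP F 2] [CharP K 2]

theorem rg_sq (hK : ∀ x : K, ∃ y : F, f y = x ^ 2) : ∀ s ∈ rg f, ∀ t : K, s * (t * t) ∈ rg f := by
  intro s hs t
  obtain ⟨y, rfl⟩ := (mem_rg _ _).1 hs
  obtain ⟨w, hw⟩ := hK t
  exact (mem_rg _ _).2 ⟨y * w, by rw [map_mul, hw, pow_two]⟩

theorem lag_mapI (hK : ∀ x : K, ∃ y : F, f y = x ^ 2) (n : ℕ) : ∀ z : IQ F, dm z = n → NS z → Lag (rg f) (mapI f z) := by
  induction n using Nat.strong_induction_on with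
  | _ n ih =>
  intro z hn hz
  by_cases h0 : dm z = 0
  · rw [dm_zero z h0, mapI_zero]; exact lag_zero _
  obtain ⟨c, x, z', rfl, hz', hd⟩ := decomp z hz h0
  rw [mapI_add, mapI_bn]
  exact lag_add (lag_bn (rg_sq f hK) _ _ ⟨c, rfl⟩) (ih (dm z') (by omega) z' rfl hz')

theorem main_ind (hK : ∀ x : K, ∃ y : F, f y = x ^ 2) (a : List F) (ha : ∀ c ∈ a, c ≠ 0) (n : ℕ) : ∀ z : IQ K, dm z = n → NS z →
    Lag (rg f) (pf (a.map fun c => f c) z) →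
    ∃ z0 : IQ F, NS z0 ∧ pf (a.map fun c => f c) z = pf (a.map fun c => f c) (mapI f z0) := by
  have hl : ∀ c ∈ a.map (fun c => f c), c ≠ 0 := by
    intro c hc
    obtain ⟨d, hd, rfl⟩ := List.mem_map.1 hc
    exact (map_ne_zero f).2 (ha d hd)
  have hlS : ∀ c ∈ a.map (fun c => f c), ∀ s ∈ rg f, c * s ∈ rg f := by
    intro c hc s hs
    obtain ⟨d, hd, rfl⟩ := List.mem_map.1 hc
    obtain ⟨y, rfl⟩ := (mem_rg _ _).1 hs
    exact (mem_rg _ _).2 ⟨d * y, map_mul _ _ _⟩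
  generalize a.map (fun c => f c) = l at *
  induction n using Nat.strong_induction_on with
  | _ n ih =>
  intro z hn hz hL
  obtain ⟨q, hq⟩ : ∃ q, cls q = pf l z := Quotient.exists_rep _
  have hL' := hL
  rw [← hq, cls_toQ, lag_iff] at hL'
  obtain ⟨L, h1, h2⟩ := hL'
  by_cases hv : ∃ v ∈ L, toQ q v ≠ 0
  · obtain ⟨v, hv, hv0⟩ := hv
    obtain ⟨e, he⟩ := (mem_rg _ _).1 (h1 v hv)
    have hr : Rep (pf l z) (toQ q v) := by
      rw [← hq, cls_toQ, rep_iff]; exact ⟨v, rfl⟩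
    rw [← he] at hr hv0
    obtain ⟨x, z', h3, hz', hd⟩ := pf_rep l _ z _ rfl hz hv0 hr
    rw [h3, pf_add] at hL
    have hL2 := lag_reduce hL (lag_pf l hl hlS _ (lag_bn (rg_sq f hK) _ _ ⟨e, rfl⟩))
    obtain ⟨z0, hz0, h4⟩ := ih (dm z') (by omega) z' rfl hz' hL2
    obtain ⟨y, hy⟩ := hK x
    refine ⟨bn e (e * y) + z0, (ns_add _ _).2 ⟨ns_bn _ _, hz0⟩, ?_⟩
    rw [h3, pf_add, h4, mapI_add, pf_add, mapI_bn, bn_shift _ x x]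
    congr 3
    have h2 : (2 : K) = 0 := CharTwo.two_eq_zero
    rw [map_mul, hy]
    linear_combination x * h2
  · push Not at hv
    have hL2 : Lag ⊥ (pf l z) := by
      rw [← hq, cls_toQ, lag_iff]
      exact ⟨L, fun x hx => by rw [AddSubgroup.mem_bot]; exact hv x hx, h2⟩
    obtain ⟨k, hk, hk'⟩ := hyper _ _ rfl (ns_pf l hl z hz) hL2
    obtain ⟨r, hr⟩ := even_dm _ z rfl hz
    have aux : ∀ r : ℕ, NS (r • bn (0 : F) 0) ∧ mapI f (r • bn 0 0) = r • bn 0 0 := by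
      intro r
      induction r with
      | zero =>
        rw [zero_nsmul, zero_nsmul]
        refine ⟨?_, mapI_zero f⟩
        rw [← clsQ_zero (0 : QuadraticForm F (Fin 0 → F)), ns_iff]
        exact fun x _ => Subsingleton.elim _ _
      | succ r ih =>
        rw [succ_nsmul, succ_nsmul, mapI_add, ih.2, mapI_bn, map_zero, ns_add]
        exact ⟨⟨ih.1, ns_bn _ _⟩, rfl⟩
    refine ⟨r • bn 0 0, (aux r).1, ?_⟩
    rw [(aux r).2, hk, pf_hyp l hl]
    congr 1
    rw [dm_pf, hr] at hk'
    have : 2 * (2 ^ l.length * r) = 2 * k := by rw [← hk']; ring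
    omega

end basechange

end PfDesc

open QF in
/-- Let `F` have characteristic 2, `K/F` purely inseparable of
exponent 1 (`K² ⊆ F`), `B = ⟨⟨a₁,…,aₙ⟩⟩_b` a bilinear Pfister form over `F`, and `ρ` a
nonsingular quadratic form over `K` such that `B_K ⊗ ρ` is defined over `F`, i.e.
`φ_K ≅ B_K ⊗ ρ` for some quadratic form `φ` over `F`.  Then there is a nonsingular
quadratic form `ρ₀` over `F` with `φ_K ≅ B_K ⊗ ρ ≅ (B ⊗ ρ₀)_K`. -/
theorem pfister_multiple_descends
    (F K : Type*) [Field F] [Field K] [Algebra F K] [CharP F 2]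
    (hK : ∀ x : K, ∃ y : F, algebraMap F K y = x ^ 2)
    (a : List F) (ha : ∀ c ∈ a, c ≠ 0)
    (ρ : QF K) (hρ : ρ.Nonsingular)
    (φ : QF F)
    (hφ : Isometric (φ.map (algebraMap F K))
      (pfTensor (a.map fun c => algebraMap F K c) ρ)) :
    ∃ ρ₀ : QF F, ρ₀.Nonsingular ∧
      Isometric (φ.map (algebraMap F K)) ((pfTensor a ρ₀).map (algebraMap F K)) ∧
      Isometric (pfTensor (a.map fun c => algebraMap F K c) ρ)
        ((pfTensor a ρ₀).map (algebraMap F K)) := by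

  haveI : CharP K 2 := charP_of_injective_algebraMap (algebraMap F K).injective 2
  have hl : ∀ c ∈ a.map (fun c => algebraMap F K c), c ≠ 0 := by
    intro c hc
    obtain ⟨d, hd, rfl⟩ := List.mem_map.1 hc
    exact (map_ne_zero (algebraMap F K)).2 (ha d hd)
  rw [← PfDesc.cls_eq, PfDesc.cls_pfTensor, ← PfDesc.mapI_cls] at hφ
  rw [← PfDesc.ns_cls] at hρ
  have hns : PfDesc.NS (PfDesc.cls φ) := by
    apply PfDesc.ns_of_mapI (algebraMap F K)
    rw [hφ]
    exact PfDesc.ns_pf _ hl _ hρ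
  have hL := PfDesc.lag_mapI (algebraMap F K) hK _ _ rfl hns
  rw [hφ] at hL
  obtain ⟨z0, hz0, h⟩ := PfDesc.main_ind (algebraMap F K) hK a ha _ _ rfl hρ hL
  obtain ⟨ρ₀, rfl⟩ : ∃ q, PfDesc.cls q = z0 := Quotient.exists_rep _
  refine ⟨ρ₀, (PfDesc.ns_cls _).1 hz0, ?_, ?_⟩
  · rw [← PfDesc.cls_eq, ← PfDesc.mapI_cls, ← PfDesc.mapI_cls, hφ, PfDesc.cls_pfTensor,
      PfDesc.mapI_pf, h]
  · rw [← PfDesc.cls_eq, PfDesc.cls_pfTensor, ← PfDesc.mapI_cls, PfDesc.cls_pfTensor,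
      PfDesc.mapI_pf, h]
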